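/- Let H be a complex separable infinite-dimensional Hilbert space and T a bounded operator on H whose polynomial hull of the spectrum satisfies σ̂(T) ⊇ closed unit disc. Let n ≥ 1, let L be a nonzero separable complex Hilbert space, and let C, A_1, …, A_n be bounded operators on L with ‖C‖ < 1 and ‖A_j‖ ≤ (1 − ‖C‖)^n / (n · 2^{2n+4}) for each j = 1, …, n. Then there exists a closed subspace K ⊂ H and a unitary U : L → K such that ⟨T^j (U u), U v⟩ = ⟨(C^j + A_j) u, v⟩ for all u, v ∈ L and all j = 1, …, n; that is, the compression of the tuple (T, T², …, T^n) to K is jointly unitarily equivalent to (C + A_1, C² + A_2, …, C^n + A_n). -/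

import Mathlib

open Filter Metric
open scoped ComplexInnerProductSpace

/-- The polynomial hull of a set `K ⊂ ℂ`. -/
def polyHull (K : Set ℂ) : Set ℂ :=
  {z | ∀ p : Polynomial ℂ, ‖p.eval z‖ ≤ sSup ((fun w => ‖p.eval w‖) '' K)}

/-!
Let `z` be a point of the open unit disc and `p` a polynomial. Suppose that, on a subspace of
finite codimension, the numerical range of `p(T)` stays to the left of a line `re w = u` with
`u < re p(z)`. Then every frontier point of `σ(p(T))` to the right of that line is an eigenvalue,
and upper triangularisation leaves only finitely many of them to the right of any further line. A
finite set there does not enlarge the polynomial hull, while the image under `p` of a disc in the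
hull of `σ(T)` is infinite: a contradiction. By Hahn–Banach, `(z, z², …, zⁿ)` therefore lies in
the joint essential numerical range of `(T, T², …, Tⁿ)`, which is closed and convex.

Interior points of the joint essential numerical range are attained exactly, at unit vectors
orthogonal to any given finite set. Such vectors, chosen inductively, assemble to isometric copies
of `L` in `H` with vanishing off-diagonal entries, on each of which `(T, T², …, Tⁿ)` is scalar.
Hence every tuple `X j = ∑ i, v i j • E i`, with `v i` interior and `E` a positive operator
measure of total mass `1`, is a compression.

Finally, `(C + A_1, …, Cⁿ + A_n)` is such a tuple, with `v i` on the moment curve over the open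
disc. The trigonometric polynomial with these coefficients, continued by further powers of `C`, is
the Poisson kernel of `C` up to a small error and thus positive, so Fourier inversion at roots of
unity gives the measure.
-/

section PolyHull

open Polynomial

lemma eval_mem_polyHull_image {K : Set ℂ} {z : ℂ} (hz : z ∈ polyHull K) (p : ℂ[X]) :
    p.eval z ∈ polyHull ((p.eval ·) '' K) := by
  intro q
  simpa [Set.image_image, eval_comp] using hz (q.comp p)

lemma polyHull_subset_polyHull_frontier {K : Set ℂ} (hK : IsCompact K) :
    polyHull K ⊆ polyHull (frontier K) := by
  intro z hz p
  refine (hz p).trans (Real.sSup_le ?_ (Real.sSup_nonneg ?_))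
  swap
  · rintro _ ⟨w, -, rfl⟩
    exact norm_nonneg _
  have hbdd : BddAbove ((fun w ↦ ‖p.eval w‖) '' frontier K) :=
    ((hK.of_isClosed_subset isClosed_frontier hK.isClosed.frontier_subset).image
      (by fun_prop)).bddAbove
  have hfrontier : ∀ w ∈ frontier K, ‖p.eval w‖ ≤ sSup ((fun w ↦ ‖p.eval w‖) '' frontier K) :=
    fun w hw ↦ le_csSup hbdd ⟨w, hw, rfl⟩
  rintro _ ⟨w, hw, rfl⟩
  by_cases hwi : w ∈ interior K
  · refine Complex.norm_le_of_forall_mem_frontier_norm_le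
      (hK.isBounded.subset interior_subset) p.differentiable.diffContOnCl ?_ (subset_closure hwi)
    exact fun v hv ↦ hfrontier v (frontier_interior_subset hv)
  · exact hfrontier w ⟨subset_closure hw, hwi⟩

-- A point outside is separated by `(X - a) ^ k * ∏ s ∈ Z, (X - s)` for large `k`.
lemma polyHull_subset_closedBall_union {K Z : Set ℂ} {a : ℂ} {ρ : ℝ} (hρ : 0 ≤ ρ)
    (hZ : Z.Finite) (hK : K ⊆ closedBall a ρ ∪ Z) : polyHull K ⊆ closedBall a ρ ∪ Z := by
  intro z hz
  by_contra hz'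
  rw [Set.mem_union, mem_closedBall, dist_eq_norm, not_or, not_le] at hz'
  obtain ⟨hρz, hzZ⟩ := hz'
  set q : ℂ[X] := ∏ s ∈ hZ.toFinset, (X - C s) with hq
  have hqz : 0 < ‖q.eval z‖ := by
    rw [norm_pos_iff, hq, eval_prod, Finset.prod_ne_zero_iff]
    rintro s hs
    rw [eval_sub, eval_X, eval_C, sub_ne_zero]
    rintro rfl
    exact hzZ (hZ.mem_toFinset.1 hs)
  have hqZ : ∀ s ∈ Z, q.eval s = 0 := fun s hs ↦ by
    rw [hq, eval_prod]
    exact Finset.prod_eq_zero (hZ.mem_toFinset.2 hs) (by simp)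
  obtain ⟨D, hD⟩ :=
    (isCompact_closedBall a ρ).exists_bound_of_continuousOn q.continuous.continuousOn
  have hD0 : 0 ≤ D := (norm_nonneg _).trans (hD a (mem_closedBall_self hρ))
  obtain ⟨k, hk⟩ : ∃ k : ℕ, ρ ^ k * D < ‖z - a‖ ^ k * ‖q.eval z‖ := by
    have hratio : Tendsto (fun k : ℕ ↦ (ρ / ‖z - a‖) ^ k * D) atTop (nhds (0 * D)) :=
      (tendsto_pow_atTop_nhds_zero_of_lt_one (by positivity)
        ((div_lt_one (hρ.trans_lt hρz)).2 hρz)).mul_const D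
    rw [zero_mul] at hratio
    obtain ⟨k, hk⟩ := (hratio.eventually_lt_const hqz).exists
    refine ⟨k, ?_⟩
    rwa [div_pow, div_mul_eq_mul_div, div_lt_iff₀ (pow_pos (hρ.trans_lt hρz) k), mul_comm ‖_‖] at hk
  have hsup : sSup ((fun w ↦ ‖((X - C a) ^ k * q).eval w‖) '' K) ≤ ρ ^ k * D := by
    refine Real.sSup_le ?_ (by positivity)
    rintro _ ⟨w, hw, rfl⟩
    rcases hK hw with hwa | hwZ
    · simp only [eval_mul, norm_mul, eval_pow, norm_pow, eval_sub, eval_X, eval_C]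
      rw [mem_closedBall, dist_eq_norm] at hwa
      gcongr
      exact hD w (mem_closedBall_iff_norm.2 hwa)
    · simp only [eval_mul, hqZ w hwZ, mul_zero, norm_zero]
      positivity
  refine hk.not_ge ?_
  simpa using (hz ((X - C a) ^ k * q)).trans hsup

lemma norm_add_ofReal_sq (w : ℂ) (R : ℝ) :
    ‖w + R‖ ^ 2 = ‖w‖ ^ 2 + 2 * R * w.re + R ^ 2 := by
  simp only [Complex.sq_norm, Complex.normSq_apply, Complex.add_re, Complex.add_im,
    Complex.ofReal_re, Complex.ofReal_im]
  ring

-- The disc centred at `-R` through the far points of `K` on the left of `re = u` flattens to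
-- the half-plane as `R → ∞`.
lemma mem_of_mem_polyHull_of_finite_halfPlane {K : Set ℂ} {u : ℝ} {v : ℂ}
    (hK : Bornology.IsBounded K) (hfin : {w ∈ K | u ≤ w.re}.Finite) (hv : v ∈ polyHull K)
    (huv : u < v.re) : v ∈ K := by
  obtain ⟨B, hB⟩ := hK.exists_norm_le
  obtain ⟨R, hR⟩ : ∃ R : ℝ, 0 ≤ R ∧ 0 ≤ R + 2 * u ∧ B ^ 2 < 2 * R * (v.re - u) := by
    have hlarge := (tendsto_id (α := ℝ) (x := atTop)).const_mul_atTop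
      (show 0 < 2 * (v.re - u) by linarith)
    obtain ⟨R, h₀, h₁, h₂⟩ := ((eventually_ge_atTop (0 : ℝ)).and
      ((eventually_ge_atTop (-2 * u)).and (hlarge.eventually_gt_atTop (B ^ 2)))).exists
    exact ⟨R, h₀, by linarith, by simp only [id_eq] at h₂; linarith⟩
  obtain ⟨hR₀, hRu, hRv⟩ := hR
  have hcover : K ⊆ closedBall (-R : ℂ) √(R ^ 2 + 2 * R * u + B ^ 2) ∪ {w ∈ K | u ≤ w.re} := by
    intro w hw
    rcases le_or_gt u w.re with huw | hwu
    · exact Or.inr ⟨hw, huw⟩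
    left
    rw [mem_closedBall, dist_eq_norm, sub_neg_eq_add]
    refine Real.le_sqrt_of_sq_le ?_
    rw [norm_add_ofReal_sq]
    have := pow_le_pow_left₀ (norm_nonneg w) (hB w hw) 2
    nlinarith [mul_le_mul_of_nonneg_left hwu.le hR₀]
  rcases polyHull_subset_closedBall_union (Real.sqrt_nonneg _) hfin hcover hv with hball | hvK
  · rw [mem_closedBall, dist_eq_norm, sub_neg_eq_add] at hball
    have := pow_le_pow_left₀ (norm_nonneg _) hball 2
    rw [norm_add_ofReal_sq, Real.sq_sqrt (by nlinarith [sq_nonneg B])] at this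
    nlinarith [sq_nonneg ‖v‖]
  · exact hvK.1

end PolyHull

section Spectrum

variable {E : Type*} [NormedAddCommGroup E]

lemma not_antilipschitzWith_of_mem_frontier_spectrum [NormedSpace ℂ E] [CompleteSpace E]
    {S : E →L[ℂ] E} {w : ℂ} (hw : w ∈ frontier (spectrum ℂ S)) {M : NNReal} :
    ¬ AntilipschitzWith M (algebraMap ℂ (E →L[ℂ] E) w - S) := by
  intro hM
  have hwS : w ∈ spectrum ℂ S := (spectrum.isClosed S).frontier_subset hw
  obtain ⟨z, hzS, hzw⟩ : ∃ z ∉ spectrum ℂ S, ‖z - w‖ * (2 * M) < 1 := by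
    rw [frontier_eq_closure_inter_closure] at hw
    obtain ⟨z, hzS, hz⟩ := Metric.mem_closure_iff.1 hw.2 (1 / (2 * M + 1)) (by positivity)
    refine ⟨z, hzS, ?_⟩
    rw [dist_comm, dist_eq_norm, lt_div_iff₀ (by positivity)] at hz
    nlinarith [norm_nonneg (z - w)]
  obtain ⟨R, hR⟩ := not_not.1 hzS
  have hbelow (x : E) : ‖x‖ ≤ 2 * M * ‖(R : E →L[ℂ] E) x‖ := by
    have hx := ZeroHomClass.bound_of_antilipschitz _ hM x
    have hsplit : (algebraMap ℂ (E →L[ℂ] E) w - S) x = (R : E →L[ℂ] E) x - (z - w) • x := by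
      simp only [hR, sub_apply, ContinuousLinearMap.algebraMap_apply, sub_smul]
      abel
    rw [hsplit] at hx
    have := norm_sub_le ((R : E →L[ℂ] E) x) ((z - w) • x)
    rw [norm_smul] at this
    nlinarith [mul_le_mul_of_nonneg_left this M.2,
      mul_le_mul_of_nonneg_right hzw.le (norm_nonneg x)]
  have hinv : ‖(↑R⁻¹ : E →L[ℂ] E)‖ ≤ 2 * M := by
    refine ContinuousLinearMap.opNorm_le_bound _ (by positivity) fun x ↦ ?_
    simpa [← mul_apply_eq_comp] using hbelow ((↑R⁻¹ : E →L[ℂ] E) x)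
  have hsmall : ‖(z - w) • (↑R⁻¹ : E →L[ℂ] E)‖ < 1 := by
    rw [norm_smul]
    exact (mul_le_mul_of_nonneg_left hinv (norm_nonneg _)).trans_lt hzw
  have hfactor : algebraMap ℂ (E →L[ℂ] E) w - S = R * (1 - (z - w) • (↑R⁻¹ : E →L[ℂ] E)) := by
    rw [mul_sub, mul_one, mul_smul_comm, Units.mul_inv, hR, ← Algebra.algebraMap_eq_smul_one,
      map_sub]
    abel
  refine hwS ?_
  rw [spectrum.mem_resolventSet_iff, hfactor]
  exact R.isUnit.mul (isUnit_one_sub_of_norm_lt_one hsmall)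

lemma exists_antilipschitzWith_of_injective_of_cofg [NormedSpace ℂ E] [CompleteSpace E]
    {A : E →L[ℂ] E} (hA : Function.Injective A) {V : Submodule ℂ E} [CompleteSpace V] [V.CoFG]
    {c : ℝ} (hc : 0 < c) (hV : ∀ x ∈ V, c * ‖x‖ ≤ ‖A x‖) : ∃ M, AntilipschitzWith M A := by
  have hAV : AntilipschitzWith c⁻¹.toNNReal (A ∘L V.subtypeL) := by
    refine ContinuousLinearMap.antilipschitz_of_bound _ fun x ↦ ?_
    rw [Real.coe_toNNReal _ (inv_nonneg.2 hc.le), inv_mul_eq_div, le_div_iff₀' hc]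
    exact hV x x.2
  have hclosed : IsClosed (V.map A.toLinearMap : Set E) := by
    convert hAV.isClosed_range (A ∘L V.subtypeL).uniformContinuous
    ext
    simp
  exact A.antilipschitz_of_injective_of_isClosed_range hA
    (LinearMap.isClosed_range_of_isClosed_map_of_finiteDimensional_quotient hclosed)

variable [InnerProductSpace ℂ E]

lemma inner_self_eq_ofReal (x : E) : ⟪x, x⟫ = ((‖x‖ ^ 2 : ℝ) : ℂ) := by
  simp [inner_self_eq_norm_sq_to_K]

lemma norm_sub_mul_le_of_re_inner_le {S : E →L[ℂ] E} {u : ℝ} {x : E}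
    (hx : (⟪x, S x⟫).re ≤ u * ‖x‖ ^ 2) (w : ℂ) :
    (w.re - u) * ‖x‖ ≤ ‖(algebraMap ℂ (E →L[ℂ] E) w - S) x‖ := by
  rcases (norm_nonneg x).eq_or_lt with h₀ | hpos
  · simp [← h₀]
  refine le_of_mul_le_mul_left ?_ hpos
  have hre : (⟪x, (algebraMap ℂ (E →L[ℂ] E) w - S) x⟫).re = w.re * ‖x‖ ^ 2 - (⟪x, S x⟫).re := by
    rw [sub_apply, ContinuousLinearMap.algebraMap_apply, inner_sub_right, inner_smul_right,
      inner_self_eq_ofReal, Complex.sub_re, Complex.re_mul_ofReal]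
  have := (Complex.re_le_norm _).trans (norm_inner_le_norm x ((algebraMap ℂ (E →L[ℂ] E) w - S) x))
  nlinarith

lemma re_inner_le_mul_norm_sq_of_forall_norm_eq_one {S : E →L[ℂ] E} {V : Submodule ℂ E} {u : ℝ}
    (hV : ∀ x ∈ V, ‖x‖ = 1 → (⟪x, S x⟫).re ≤ u) {x : E} (hx : x ∈ V) :
    (⟪x, S x⟫).re ≤ u * ‖x‖ ^ 2 := by
  rcases eq_or_ne x 0 with rfl | hx₀
  · simp
  have hunit := hV _ (V.smul_mem ((‖x‖ : ℂ)⁻¹) hx) (norm_smul_inv_norm (𝕜 := ℂ) hx₀)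
  rw [map_smul, inner_smul_left, inner_smul_right, ← Complex.ofReal_inv,
    Complex.conj_ofReal, ← mul_assoc, ← Complex.ofReal_mul, Complex.re_ofReal_mul] at hunit
  have hpos : 0 < ‖x‖ := norm_pos_iff.2 hx₀
  field_simp at hunit
  linarith

lemma hasEigenvalue_of_mem_frontier_spectrum [CompleteSpace E] {S : E →L[ℂ] E} {w : ℂ}
    (hw : w ∈ frontier (spectrum ℂ S)) {F : Submodule ℂ E} [FiniteDimensional ℂ F] {u : ℝ}
    (hF : ∀ x ∈ Fᗮ, (⟪x, S x⟫).re ≤ u * ‖x‖ ^ 2) (huw : u < w.re) :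
    Module.End.HasEigenvalue S.toLinearMap w := by
  by_contra hne
  have hinj : Function.Injective (algebraMap ℂ (E →L[ℂ] E) w - S) := by
    refine (injective_iff_map_eq_zero _).2 fun x hx ↦ ?_
    by_contra hx₀
    refine hne (Module.End.hasEigenvalue_of_hasEigenvector
      (Module.End.hasEigenvector_iff.2 ⟨Module.End.mem_eigenspace_iff.2 ?_, hx₀⟩))
    exact (sub_eq_zero.1 hx).symm
  have : Fᗮ.CoFG := Submodule.FG.cofg_of_isCompl F.isCompl_orthogonal
    (F.fg_top.1 Module.Finite.fg_top)
  obtain ⟨M, hM⟩ := exists_antilipschitzWith_of_injective_of_cofg hinj (sub_pos.2 huw)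
    fun x hx ↦ norm_sub_mul_le_of_re_inner_le (hF x hx) w
  exact not_antilipschitzWith_of_mem_frontier_spectrum hw hM

-- Riesz' argument: orthonormalising the eigenvectors makes `S` upper triangular with diagonal `w`.
lemma exists_orthonormal_inner_eq_of_hasEigenvalue {S : Module.End ℂ E} {w : ℕ → ℂ}
    (hw : Function.Injective w) (hS : ∀ m, S.HasEigenvalue (w m)) :
    ∃ y : ℕ → E, Orthonormal ℂ y ∧ ∀ m, ⟪y m, S (y m)⟫ = w m := by
  choose f hf using fun m ↦ (hS m).exists_hasEigenvector
  have hlin : LinearIndependent ℂ f := S.eigenvectors_linearIndependent' w hw f hf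
  set g : ℕ → E := InnerProductSpace.gramSchmidtNormed ℂ f
  have hg : Orthonormal ℂ g := InnerProductSpace.gramSchmidtNormed_orthonormal hlin
  refine ⟨g, hg, fun m ↦ ?_⟩
  have hspan (k : ℕ) : Submodule.span ℂ (g '' Set.Iio k) = Submodule.span ℂ (f '' Set.Iio k) := by
    rw [InnerProductSpace.span_gramSchmidtNormed, InnerProductSpace.span_gramSchmidt_Iio]
  have hgm : g m ∈ Submodule.span ℂ (f '' Set.Iio (m + 1)) :=
    hspan (m + 1) ▸ Submodule.subset_span ⟨m, m.lt_succ_self, rfl⟩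
  have hlower : S (g m) - w m • g m ∈ Submodule.span ℂ (f '' Set.Iio m) := by
    suffices Submodule.span ℂ (f '' Set.Iio (m + 1)) ≤
        (Submodule.span ℂ (f '' Set.Iio m)).comap (S - algebraMap ℂ (Module.End ℂ E) (w m)) from
      this hgm
    rw [Submodule.span_le]
    rintro _ ⟨k, hk, rfl⟩
    have hfk : (S - algebraMap ℂ (Module.End ℂ E) (w m)) (f k) = (w k - w m) • f k := by
      simp [(hf k).apply_eq_smul, sub_smul]
    rw [SetLike.mem_coe, Submodule.mem_comap, hfk]
    rcases (Nat.lt_succ_iff.1 hk).eq_or_lt with rfl | hkm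
    · simp
    · exact Submodule.smul_mem _ _ (Submodule.subset_span ⟨k, hkm, rfl⟩)
  have horth : ⟪g m, S (g m) - w m • g m⟫ = 0 := by
    rw [← hspan m] at hlower
    refine Submodule.mem_orthogonal_singleton_iff_inner_right.1 (?_ : _ ∈ (ℂ ∙ g m)ᗮ)
    refine Submodule.span_le.2 ?_ hlower
    rintro _ ⟨k, hk, rfl⟩
    exact Submodule.mem_orthogonal_singleton_iff_inner_right.2 (hg.2 (Set.mem_Iio.1 hk).ne')
  rwa [inner_sub_right, inner_smul_right, inner_self_eq_ofReal, hg.1 m, one_pow,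
    Complex.ofReal_one, mul_one, sub_eq_zero] at horth

lemma tendsto_norm_starProjection_of_orthonormal {y : ℕ → E} (hy : Orthonormal ℂ y)
    (F : Submodule ℂ E) [FiniteDimensional ℂ F] :
    Tendsto (fun m ↦ ‖F.starProjection (y m)‖) atTop (nhds 0) := by
  have hcoord (f : E) : Tendsto (fun m ↦ ⟪f, y m⟫) atTop (nhds 0) := by
    rw [tendsto_zero_iff_norm_tendsto_zero]
    have := (hy.inner_products_summable f).tendsto_atTop_zero
    have := (Real.continuous_sqrt.tendsto 0).comp this
    simpa [Function.comp_def, norm_inner_symm f] using this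
  have hsum := tendsto_finsetSum Finset.univ fun i _ ↦
    (hcoord (stdOrthonormalBasis ℂ F i)).smul_const (stdOrthonormalBasis ℂ F i : E)
  simpa [(stdOrthonormalBasis ℂ F).starProjection_eq_sum_rankOne] using hsum.norm

lemma re_inner_le_of_forall_mem_orthogonal {S : E →L[ℂ] E} {F : Submodule ℂ E}
    [F.HasOrthogonalProjection] {u : ℝ} (hF : ∀ x ∈ Fᗮ, (⟪x, S x⟫).re ≤ u * ‖x‖ ^ 2) {y : E}
    (hy : ‖y‖ = 1) : (⟪y, S y⟫).re ≤ u + (2 * ‖S‖ + |u|) * ‖F.starProjection y‖ := by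
  set p := F.starProjection y
  set q := Fᗮ.starProjection y
  have hpq : y = p + q := (F.starProjection_add_starProjection_orthogonal y).symm
  have hpyth : ‖p‖ ^ 2 + ‖q‖ ^ 2 = 1 := by
    rw [← one_pow 2, ← hy]
    exact (F.norm_sq_eq_add_norm_sq_starProjection y).symm
  have hp : ‖p‖ ≤ 1 := by nlinarith [norm_nonneg p, sq_nonneg ‖q‖]
  have hq : ‖q‖ ≤ 1 := by nlinarith [norm_nonneg q, sq_nonneg ‖p‖]
  have hsplit : (⟪y, S y⟫).re = (⟪p, S y⟫).re + (⟪q, S p⟫).re + (⟪q, S q⟫).re := by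
    nth_rw 1 [hpq]
    rw [inner_add_left, add_assoc, ← Complex.add_re, ← inner_add_right, ← map_add, ← hpq,
      Complex.add_re]
  have hpS : (⟪p, S y⟫).re ≤ ‖S‖ * ‖p‖ :=
    calc (⟪p, S y⟫).re ≤ ‖p‖ * ‖S y‖ := (Complex.re_le_norm _).trans (norm_inner_le_norm _ _)
      _ ≤ ‖p‖ * (‖S‖ * ‖y‖) := by gcongr; exact S.le_opNorm y
      _ = ‖S‖ * ‖p‖ := by rw [hy, mul_one, mul_comm]
  have hqS : (⟪q, S p⟫).re ≤ ‖S‖ * ‖p‖ :=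
    calc (⟪q, S p⟫).re ≤ ‖q‖ * ‖S p‖ := (Complex.re_le_norm _).trans (norm_inner_le_norm _ _)
      _ ≤ 1 * (‖S‖ * ‖p‖) := by gcongr; exact S.le_opNorm p
      _ = ‖S‖ * ‖p‖ := one_mul _
  have huq : u * ‖q‖ ^ 2 ≤ u + |u| * ‖p‖ := by
    have : -u * ‖p‖ ^ 2 ≤ |u| * ‖p‖ :=
      mul_le_mul (neg_le_abs u) (by nlinarith [norm_nonneg p]) (sq_nonneg _) (abs_nonneg u)
    rw [← eq_sub_iff_add_eq'] at hpyth
    rw [hpyth]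
    linarith
  linarith [hF q (Submodule.starProjection_apply_mem _ y)]

lemma finite_setOf_hasEigenvalue_le_re {S : E →L[ℂ] E} {F : Submodule ℂ E} [FiniteDimensional ℂ F]
    {u u' : ℝ} (hF : ∀ x ∈ Fᗮ, (⟪x, S x⟫).re ≤ u * ‖x‖ ^ 2) (hu : u < u') :
    {w : ℂ | Module.End.HasEigenvalue S.toLinearMap w ∧ u' ≤ w.re}.Finite := by
  by_contra hinf
  obtain ⟨w, hw⟩ : ∃ w : ℕ ↪ ℂ, ∀ m, w m ∈ _ :=
    ⟨(Set.Infinite.natEmbedding _ hinf).trans (.subtype _), fun m ↦ Subtype.coe_prop _⟩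
  obtain ⟨y, hy, hyw⟩ := exists_orthonormal_inner_eq_of_hasEigenvalue w.injective fun m ↦ (hw m).1
  have hlim := (((tendsto_norm_starProjection_of_orthonormal hy F).const_mul
    (2 * ‖S‖ + |u|)).const_add u).eventually_lt_const (by simpa using hu)
  obtain ⟨m, hm⟩ := hlim.exists
  refine (hw m).2.not_gt (lt_of_le_of_lt ?_ hm)
  rw [← hyw m]
  exact re_inner_le_of_forall_mem_orthogonal hF (hy.1 m)

open Polynomial in
lemma exists_lt_re_inner_aeval_of_degree_pos [CompleteSpace E] (T : E →L[ℂ] E) {z : ℂ}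
    (hz : z ∈ closure (interior (polyHull (spectrum ℂ T)))) {p : ℂ[X]} (hp : 0 < p.degree)
    {u : ℝ} (hu : u < (p.eval z).re) (F : Submodule ℂ E) [FiniteDimensional ℂ F] :
    ∃ x ∈ Fᗮ, ‖x‖ = 1 ∧ u < (⟪x, aeval T p x⟫).re := by
  by_contra! hno
  set S := aeval T p with hS
  have hF : ∀ x ∈ Fᗮ, (⟪x, S x⟫).re ≤ u * ‖x‖ ^ 2 :=
    fun x hx ↦ re_inner_le_mul_norm_sq_of_forall_norm_eq_one hno hx
  obtain ⟨u', huu', hu'⟩ := exists_between hu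
  have hfin : {w ∈ frontier (spectrum ℂ S) | u' ≤ w.re}.Finite :=
    (finite_setOf_hasEigenvalue_le_re hF huu').subset fun w hw ↦
      ⟨hasEigenvalue_of_mem_frontier_spectrum hw.1 hF (huu'.trans_le hw.2), hw.2⟩
  set O : Set ℂ := interior (polyHull (spectrum ℂ T)) ∩ {v | u' < (p.eval v).re}
  have hmaps : ∀ v ∈ O, p.eval v ∈ {w ∈ frontier (spectrum ℂ S) | u' ≤ w.re} := by
    rintro v ⟨hv, huv⟩
    refine ⟨mem_of_mem_polyHull_of_finite_halfPlane
      ((spectrum.isCompact S).isBounded.subset (spectrum.isClosed S).frontier_subset) hfin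
      (polyHull_subset_polyHull_frontier (spectrum.isCompact S) ?_) huv, huv.le⟩
    rw [hS, spectrum.map_polynomial_aeval_of_degree_pos _ _ hp]
    exact eval_mem_polyHull_image (interior_subset hv) p
  have hOinf : O.Infinite := by
    have hopen : IsOpen {v | u' < (p.eval v).re} :=
      isOpen_lt continuous_const (Complex.continuous_re.comp p.continuous)
    obtain ⟨v, hv, huv⟩ := mem_closure_iff.1 hz _ hopen hu'
    exact infinite_of_mem_nhds v ((isOpen_interior.inter hopen).mem_nhds ⟨huv, hv⟩)
  refine hOinf ((hfin.preimage' fun w _ ↦ ?_).subset hmaps)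
  have hpw : p - C w ≠ 0 := fun h ↦ hp.not_ge (sub_eq_zero.1 h ▸ degree_C_le)
  exact (finite_setOfPred_isRoot hpw).subset fun v hv ↦ by simpa [sub_eq_zero] using hv

open Polynomial in
theorem exists_lt_re_inner_aeval [CompleteSpace E] (T : E →L[ℂ] E) {z : ℂ}
    (hz : z ∈ closure (interior (polyHull (spectrum ℂ T)))) (p : ℂ[X]) {u : ℝ}
    (hu : u < (p.eval z).re) (F : Submodule ℂ E) [FiniteDimensional ℂ F] :
    ∃ x ∈ Fᗮ, ‖x‖ = 1 ∧ u < (⟪x, aeval T p x⟫).re := by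
  rcases lt_or_ge 0 p.degree with hp | hp
  · exact exists_lt_re_inner_aeval_of_degree_pos T hz hp hu F
  obtain ⟨x, hxF, hx, -⟩ := exists_lt_re_inner_aeval_of_degree_pos T hz (p := X)
    (by simp) (sub_one_lt _) F
  refine ⟨x, hxF, hx, ?_⟩
  rw [eq_C_of_degree_le_zero hp] at hu ⊢
  rw [eval_C] at hu
  rw [aeval_C, ContinuousLinearMap.algebraMap_apply, inner_smul_right, inner_self_eq_ofReal, hx]
  simpa using hu

end Spectrum

section EssentialNumericalRange

lemma exists_pairwise_of_forall_finset {κ α : Type*} [Countable κ] {P : κ → α → Prop}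
    {r : α → α → Prop} (hr : ∀ {x y}, r x y → r y x)
    (h : ∀ k, ∀ s : Finset α, ∃ y, P k y ∧ ∀ x ∈ s, r x y) :
    ∃ f : κ → α, (∀ k, P k (f k)) ∧ Pairwise fun k l ↦ r (f k) (f l) := by
  classical
  obtain ⟨e, he⟩ := Countable.exists_injective_nat κ
  choose g hgP hgr using h
  have hfin (k : κ) : {l | e l < e k}.Finite := (Set.finite_lt_nat (e k)).preimage he.injOn
  let f : κ → α := (measure e).wf.fix fun k ih ↦
    g k ((hfin k).toFinset.attach.image fun l ↦ ih l.1 ((hfin k).mem_toFinset.1 l.2))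
  have hf (k : κ) : f k = g k ((hfin k).toFinset.image f) := by
    have himage : (hfin k).toFinset.image f = (hfin k).toFinset.attach.image fun l ↦ f l.1 := by
      ext
      simp
    rw [himage]
    exact WellFounded.fix_eq _ _ k
  have hlt {k l : κ} (hkl : e k < e l) : r (f k) (f l) := by
    rw [hf l]
    exact hgr l _ _ (Finset.mem_image_of_mem f ((hfin l).mem_toFinset.2 hkl))
  refine ⟨f, fun k ↦ hf k ▸ hgP k _, fun k l hkl ↦ ?_⟩
  rcases (he.ne hkl).lt_or_gt with hlt' | hgt
  exacts [hlt hlt', hr (hlt hgt)]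

lemma convexHull_range_eq_image_stdSimplex {κ V : Type*} [Fintype κ] [AddCommGroup V] [Module ℝ V]
    (v : κ → V) : convexHull ℝ (Set.range v) = (fun t ↦ ∑ k, t k • v k) '' stdSimplex ℝ κ := by
  classical
  have hrange : Set.range v =
      Fintype.linearCombination ℝ v '' Set.range fun k ↦ Pi.single k (1 : ℝ) := by
    rw [← Set.range_comp]
    exact congrArg _ (funext fun k ↦ by simp)
  rw [hrange, ← LinearMap.image_convexHull, convexHull_rangle_single_eq_stdSimplex]
  rfl

lemma mem_of_closedBall_subset_thickening {V : Type*} [NormedAddCommGroup V] [NormedSpace ℝ V]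
    {Q : Set V} (hQ : Convex ℝ Q) (hQc : IsClosed Q) {v : V} {δ : ℝ} (hδ : 0 < δ)
    (hv : closedBall v δ ⊆ thickening δ Q) : v ∈ Q := by
  by_contra hvQ
  obtain ⟨f, u, hfQ, huv⟩ := geometric_hahn_banach_closed_point hQ hQc hvQ
  have hupper {x : V} (hx : x ∈ closedBall v δ) : f x ≤ u + ‖f‖ * δ := by
    obtain ⟨y, hyQ, hxy⟩ := mem_thickening_iff.1 (hv hx)
    have := (le_abs_self _).trans (f.le_opNorm (x - y))
    rw [map_sub, ← dist_eq_norm] at this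
    linarith [hfQ y hyQ, mul_le_mul_of_nonneg_left hxy.le (norm_nonneg f)]
  have hdirection (e : V) (he : ‖e‖ = 1) : δ * |f e| ≤ ‖f‖ * δ - (f v - u) := by
    have hplus := hupper (x := v + δ • e) (by simp [norm_smul, he, abs_of_pos hδ])
    have hminus := hupper (x := v - δ • e) (by simp [norm_smul, he, abs_of_pos hδ])
    rw [map_add, map_smul, smul_eq_mul] at hplus
    rw [map_sub, map_smul, smul_eq_mul] at hminus
    rcases abs_cases (f e) with ⟨h, -⟩ | ⟨h, -⟩ <;> rw [h] <;> linarith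
  have hnorm : ‖f‖ ≤ (‖f‖ * δ - (f v - u)) / δ := by
    refine ContinuousLinearMap.opNorm_le_of_unit_norm ?_ fun e he ↦ ?_
    · exact div_nonneg (by linarith [hupper (mem_closedBall_self hδ.le)]) hδ.le
    · rw [le_div_iff₀' hδ]
      exact hdirection e he
  rw [le_div_iff₀ hδ] at hnorm
  linarith

variable {E : Type*} [NormedAddCommGroup E] [InnerProductSpace ℂ E] {ι κ : Type*}

/-- The values at `x` of the quadratic forms of a family of operators. -/
noncomputable def jointQuadForm (S : ι → E →L[ℂ] E) (x : E) : ι → ℂ := fun j ↦ ⟪x, S j x⟫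

/-- The joint numerical range of a family of operators, restricted to the unit vectors
orthogonal to the finite set `s`. -/
def numRangeOn (S : ι → E →L[ℂ] E) (s : Finset E) : Set (ι → ℂ) :=
  {v | ∃ x, ‖x‖ = 1 ∧ (∀ y ∈ s, ⟪y, x⟫ = 0) ∧ jointQuadForm S x = v}

/-- The joint essential numerical range of a family of operators: the joint values that are
approximately attained on the orthogonal complement of every finite set. -/
def essNumRange (S : ι → E →L[ℂ] E) : Set (ι → ℂ) :=
  ⋂ s : Finset E, closure (numRangeOn S s)

/-- The off-diagonal entries at `x`, `y` of the identity and of all the operators `S j` vanish, so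
that the `S j` compress to diagonal matrices on the span of pairwise decoupled vectors. -/
def IsDecoupled (S : ι → E →L[ℂ] E) (x y : E) : Prop :=
  ⟪x, y⟫ = 0 ∧ ∀ j, ⟪x, S j y⟫ = 0 ∧ ⟪y, S j x⟫ = 0

lemma IsDecoupled.symm {S : ι → E →L[ℂ] E} {x y : E} (h : IsDecoupled S x y) :
    IsDecoupled S y x :=
  ⟨inner_eq_zero_symm.1 h.1, fun j ↦ (h.2 j).symm⟩

lemma isClosed_essNumRange (S : ι → E →L[ℂ] E) : IsClosed (essNumRange S) :=
  isClosed_iInter fun _ ↦ isClosed_closure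

lemma numRangeOn_anti (S : ι → E →L[ℂ] E) {s t : Finset E} (h : s ⊆ t) :
    numRangeOn S t ⊆ numRangeOn S s := by
  rintro _ ⟨x, hx, hxt, rfl⟩
  exact ⟨x, hx, fun y hy ↦ hxt y (h hy), rfl⟩

lemma exists_finset_forall_isDecoupled [CompleteSpace E] [Finite ι] (S : ι → E →L[ℂ] E)
    (s : Finset E) :
    ∃ t : Finset E, ∀ y, (∀ z ∈ t, ⟪z, y⟫ = 0) → ∀ x ∈ s, IsDecoupled S x y := by
  classical
  have := Fintype.ofFinite ι
  refine ⟨s ∪ s.biUnion fun x ↦ Finset.univ.image (fun j ↦ ContinuousLinearMap.adjoint (S j) x) ∪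
    Finset.univ.image (fun j ↦ S j x), fun y hy x hx ↦ ⟨?_, fun j ↦ ⟨?_, ?_⟩⟩⟩
  · exact hy x (Finset.mem_union_left _ hx)
  · rw [← ContinuousLinearMap.adjoint_inner_left]
    refine hy _ (Finset.mem_union_right _
      (Finset.mem_biUnion.2 ⟨x, hx, Finset.mem_union_left _ ?_⟩))
    exact Finset.mem_image_of_mem _ (Finset.mem_univ j)
  · rw [inner_eq_zero_symm]
    refine hy _ (Finset.mem_union_right _
      (Finset.mem_biUnion.2 ⟨x, hx, Finset.mem_union_right _ ?_⟩))
    exact Finset.mem_image_of_mem _ (Finset.mem_univ j)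

lemma exists_pairwise_isDecoupled [CompleteSpace E] [Finite ι] [Countable κ] (S : ι → E →L[ℂ] E)
    {P : κ → E → Prop} (h : ∀ k, ∀ s : Finset E, ∃ x, P k x ∧ ∀ y ∈ s, ⟪y, x⟫ = 0) :
    ∃ x : κ → E, (∀ k, P k (x k)) ∧ Pairwise fun k l ↦ IsDecoupled S (x k) (x l) := by
  refine exists_pairwise_of_forall_finset IsDecoupled.symm fun k s ↦ ?_
  obtain ⟨t, ht⟩ := exists_finset_forall_isDecoupled S s
  obtain ⟨y, hy, hyt⟩ := h k t
  exact ⟨y, hy, ht y hyt⟩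

lemma inner_sum_smul_apply_sum_smul [Fintype κ] {R : E →L[ℂ] E} {x : κ → E}
    (hx : Pairwise fun k l ↦ ⟪x k, R (x l)⟫ = 0) (a : κ → ℝ) :
    ⟪∑ k, (a k : ℂ) • x k, R (∑ k, (a k : ℂ) • x k)⟫ =
      ∑ k, ((a k ^ 2 : ℝ) : ℂ) * ⟪x k, R (x k)⟫ := by
  rw [map_sum, sum_inner]
  refine Finset.sum_congr rfl fun k _ ↦ ?_
  rw [inner_sum, Finset.sum_eq_single k]
  · rw [map_smul, inner_smul_left, inner_smul_right, Complex.conj_ofReal]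
    push_cast
    ring
  · intro l _ hlk
    rw [map_smul, inner_smul_left, inner_smul_right, hx hlk.symm]
    simp
  · simp

lemma convexHull_range_jointQuadForm_subset_numRangeOn [Finite κ] {S : ι → E →L[ℂ] E}
    {s : Finset E} {x : κ → E} (hx : ∀ k, ‖x k‖ = 1) (hxs : ∀ k, ∀ y ∈ s, ⟪y, x k⟫ = 0)
    (hdec : Pairwise fun k l ↦ IsDecoupled S (x k) (x l)) :
    convexHull ℝ (Set.range fun k ↦ jointQuadForm S (x k)) ⊆ numRangeOn S s := by
  cases nonempty_fintype κ
  rw [convexHull_range_eq_image_stdSimplex]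
  rintro _ ⟨t, ⟨ht₀, ht₁⟩, rfl⟩
  have hsq (k : κ) : √(t k) ^ 2 = t k := Real.sq_sqrt (ht₀ k)
  refine ⟨∑ k, ((√(t k) : ℝ) : ℂ) • x k, ?_, fun y hy ↦ ?_, funext fun j ↦ ?_⟩
  · have hnorm := inner_sum_smul_apply_sum_smul (R := 1) (fun k l hkl ↦ (hdec hkl).1)
      fun k ↦ √(t k)
    simp only [one_apply_eq_self, inner_self_eq_ofReal, hx, hsq, one_pow, Complex.ofReal_one,
      mul_one, ← Complex.ofReal_sum, ht₁] at hnorm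
    exact (pow_eq_one_iff_of_nonneg (norm_nonneg _) two_ne_zero).1 (Complex.ofReal_eq_one.1 hnorm)
  · simp [hxs _ y hy]
  · have := inner_sum_smul_apply_sum_smul (R := S j) (fun k l hkl ↦ ((hdec hkl).2 j).1)
      fun k ↦ √(t k)
    simpa [jointQuadForm, hsq] using this

lemma exists_convexHull_range_subset_numRangeOn [CompleteSpace E] [Fintype ι] [Finite κ]
    {S : ι → E →L[ℂ] E} {p : κ → ι → ℂ} (hp : ∀ k, p k ∈ essNumRange S) (s : Finset E) {ε : ℝ}
    (hε : 0 < ε) : ∃ q : κ → ι → ℂ, (∀ k, dist (p k) (q k) < ε) ∧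
      convexHull ℝ (Set.range q) ⊆ numRangeOn S s := by
  classical
  obtain ⟨x, hx, hdec⟩ := exists_pairwise_isDecoupled S (P := fun k x ↦
    ‖x‖ = 1 ∧ (∀ y ∈ s, ⟪y, x⟫ = 0) ∧ dist (p k) (jointQuadForm S x) < ε) fun k t ↦ by
      obtain ⟨_, ⟨x, hx, hxst, rfl⟩, hdist⟩ :=
        Metric.mem_closure_iff.1 (Set.mem_iInter.1 (hp k) (s ∪ t)) ε hε
      exact ⟨x, ⟨hx, fun y hy ↦ hxst y (Finset.mem_union_left _ hy), hdist⟩,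
        fun y hy ↦ hxst y (Finset.mem_union_right _ hy)⟩
  exact ⟨fun k ↦ jointQuadForm S (x k), fun k ↦ (hx k).2.2,
    convexHull_range_jointQuadForm_subset_numRangeOn (fun k ↦ (hx k).1) (fun k ↦ (hx k).2.1) hdec⟩

lemma convex_essNumRange [CompleteSpace E] [Finite ι] (S : ι → E →L[ℂ] E) :
    Convex ℝ (essNumRange S) := by
  cases nonempty_fintype ι
  intro v hv w hw a b ha hb hab
  refine Set.mem_iInter.2 fun s ↦ Metric.mem_closure_iff.2 fun ε hε ↦ ?_
  obtain ⟨q, hq, hqs⟩ := exists_convexHull_range_subset_numRangeOn (S := S) (p := ![v, w])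
    (fun k ↦ by fin_cases k; exacts [hv, hw]) s hε
  refine ⟨a • q 0 + b • q 1, hqs (convex_convexHull ℝ _
    (subset_convexHull ℝ _ (Set.mem_range_self 0)) (subset_convexHull ℝ _ (Set.mem_range_self 1))
    ha hb hab), ?_⟩
  have hv : v - q 0 ∈ ball 0 ε := by simpa [dist_eq_norm] using hq 0
  have hw : w - q 1 ∈ ball 0 ε := by simpa [dist_eq_norm] using hq 1
  have hvw := mem_ball_zero_iff.1 (convex_ball 0 ε hv hw ha hb hab)
  rwa [dist_eq_norm, add_sub_add_comm, ← smul_sub, ← smul_sub]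

lemma mem_numRangeOn_of_mem_interior_essNumRange [CompleteSpace E] [Finite ι] {S : ι → E →L[ℂ] E}
    {v : ι → ℂ} (hv : v ∈ interior (essNumRange S)) (s : Finset E) : v ∈ numRangeOn S s := by
  cases nonempty_fintype ι
  obtain ⟨b, hvb, hb⟩ := exists_mem_interior_convexHull_affineBasis (mem_interior_iff_mem_nhds.1 hv)
  obtain ⟨δ, hδ, hball⟩ := Metric.nhds_basis_closedBall.mem_iff.1 (mem_interior_iff_mem_nhds.1 hvb)
  obtain ⟨q, hq, hqs⟩ := exists_convexHull_range_subset_numRangeOn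
    (fun k ↦ hb (subset_convexHull ℝ _ ⟨k, rfl⟩)) s hδ
  refine hqs (mem_of_closedBall_subset_thickening (convex_convexHull ℝ _)
    ((Set.finite_range q).isClosed_convexHull ℝ) hδ (hball.trans (convexHull_min ?_ ?_)))
  · rintro _ ⟨k, rfl⟩
    exact mem_thickening_iff.2 ⟨q k, subset_convexHull ℝ _ ⟨k, rfl⟩, hq k⟩
  · exact (convex_convexHull ℝ _).thickening δ

lemma isBounded_numRangeOn [Finite ι] (S : ι → E →L[ℂ] E) (s : Finset E) :
    Bornology.IsBounded (numRangeOn S s) := by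
  cases nonempty_fintype ι
  refine isBounded_iff_forall_norm_le.2 ⟨∑ j, ‖S j‖, ?_⟩
  rintro _ ⟨x, hx, -, rfl⟩
  refine (pi_norm_le_iff_of_nonneg (by positivity)).2 fun j ↦ ?_
  calc ‖⟪x, S j x⟫‖ ≤ ‖x‖ * (‖S j‖ * ‖x‖) :=
        (norm_inner_le_norm _ _).trans (by gcongr; exact (S j).le_opNorm x)
    _ = ‖S j‖ := by rw [hx, one_mul, mul_one]
    _ ≤ ∑ j, ‖S j‖ := Finset.single_le_sum (fun j _ ↦ norm_nonneg (S j)) (Finset.mem_univ j)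

lemma exists_mem_essNumRange_le [Finite ι] {S : ι → E →L[ℂ] E} {f : (ι → ℂ) → ℝ}
    (hf : Continuous f) {u : ℝ} (h : ∀ s : Finset E, ∃ v ∈ numRangeOn S s, u ≤ f v) :
    ∃ v ∈ essNumRange S, u ≤ f v := by
  classical
  cases nonempty_fintype ι
  set K : Finset E → Set (ι → ℂ) := fun s ↦ closure (numRangeOn S s ∩ {v | u ≤ f v})
  have hanti {s t : Finset E} (hst : s ⊆ t) : K t ⊆ K s :=
    closure_mono (Set.inter_subset_inter_left _ (numRangeOn_anti S hst))
  obtain ⟨v, hv⟩ := IsCompact.nonempty_iInter_of_directed_nonempty_isCompact_isClosed K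
    (fun s t ↦ ⟨s ∪ t, hanti Finset.subset_union_left, hanti Finset.subset_union_right⟩)
    (fun s ↦ Set.Nonempty.closure (h s))
    (fun s ↦ ((isBounded_numRangeOn S s).subset Set.inter_subset_left).isCompact_closure)
    (fun s ↦ isClosed_closure)
  rw [Set.mem_iInter] at hv
  refine ⟨v, Set.mem_iInter.2 fun s ↦ closure_mono Set.inter_subset_left (hv s), ?_⟩
  exact closure_minimal Set.inter_subset_right (isClosed_le continuous_const hf) (hv ∅)

lemma mem_essNumRange_of_forall_lt_re_inner [CompleteSpace E] [Fintype ι] {S : ι → E →L[ℂ] E}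
    {v : ι → ℂ} (h : ∀ (c : ι → ℂ) (u : ℝ) (s : Finset E), u < (∑ j, c j * v j).re →
      ∃ x, ‖x‖ = 1 ∧ (∀ y ∈ s, ⟪y, x⟫ = 0) ∧ u < (⟪x, (∑ j, c j • S j) x⟫).re) :
    v ∈ essNumRange S := by
  classical
  by_contra hv
  obtain ⟨f, u, hfu, huv⟩ := RCLike.geometric_hahn_banach_closed_point (𝕜 := ℂ)
    (convex_essNumRange S) (isClosed_essNumRange S) hv
  have hf (w : ι → ℂ) : f w = ∑ j, f (fun i ↦ if j = i then 1 else 0) * w j := by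
    simpa [mul_comm] using f.toLinearMap.pi_apply_eq_sum_univ w
  obtain ⟨w, hw, huw⟩ := exists_mem_essNumRange_le (S := S) (u := u)
    (Complex.continuous_re.comp f.continuous) fun s ↦ by
      obtain ⟨x, hx, hxs, hux⟩ := h _ u s (hf v ▸ huv)
      refine ⟨_, ⟨x, hx, hxs, rfl⟩, ?_⟩
      rw [Function.comp_apply, hf]
      simpa [jointQuadForm] using hux.le
  exact (hfu w hw).not_ge huw

/-- The point `(z, z ^ 2, …, z ^ n)` of the moment curve. -/
def momentVec (n : ℕ) (z : ℂ) : Fin n → ℂ := fun j ↦ z ^ (j.val + 1)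

open Polynomial in
theorem momentVec_mem_essNumRange [CompleteSpace E] (T : E →L[ℂ] E) (n : ℕ) {z : ℂ}
    (hz : z ∈ closure (interior (polyHull (spectrum ℂ T)))) :
    momentVec n z ∈ essNumRange fun j : Fin n ↦ T ^ (j.val + 1) := by
  refine mem_essNumRange_of_forall_lt_re_inner fun c u s hu ↦ ?_
  set p : ℂ[X] := ∑ j : Fin n, C (c j) * X ^ (j.val + 1) with hp
  have hpz : p.eval z = ∑ j, c j * momentVec n z j := by simp [hp, eval_finsetSum, momentVec]
  have hpT : aeval T p = ∑ j, c j • T ^ (j.val + 1) := by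
    simp [hp, ← Algebra.smul_def]
  obtain ⟨x, hxs, hx, hux⟩ := exists_lt_re_inner_aeval T hz p (hpz ▸ hu) (Submodule.span ℂ s)
  exact ⟨x, hx, fun y hy ↦ hxs y (Submodule.subset_span hy), hpT ▸ hux⟩

end EssentialNumericalRange

section OperatorConvexHull

variable {L : Type*} [NormedAddCommGroup L] [InnerProductSpace ℂ L] {ι : Type*}

/-- The operator-valued convex hull of `Ω`: the tuples of operators obtained by integrating the
coordinates of `Ω` against a finitely supported normalized positive operator measure
`v i ↦ E i`. -/
def operatorConvexHull (Ω : Set (ι → ℂ)) : Set (ι → L →L[ℂ] L) :=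
  {X | ∃ (κ : Type) (_ : Fintype κ) (v : κ → ι → ℂ) (E : κ → L →L[ℂ] L),
    (∀ i, v i ∈ Ω) ∧ (∀ i, 0 ≤ E i) ∧ ∑ i, E i = 1 ∧ ∀ j, ∑ i, v i j • E i = X j}

lemma operatorConvexHull_mono {Ω Ω' : Set (ι → ℂ)} (h : Ω ⊆ Ω') :
    (operatorConvexHull Ω : Set (ι → L →L[ℂ] L)) ⊆ operatorConvexHull Ω' := by
  rintro X ⟨κ, _, v, E, hv, hE⟩
  exact ⟨κ, _, v, E, fun i ↦ h (hv i), hE⟩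

lemma mul_comp_mem_operatorConvexHull {ι' : Type*} {Ω : Set (ι → ℂ)} {Ω' : Set (ι' → ℂ)}
    {X : ι → L →L[ℂ] L} (hX : X ∈ operatorConvexHull Ω) (a : ι' → ℂ) (f : ι' → ι)
    (hΩ : Set.MapsTo (fun v j ↦ a j * v (f j)) Ω Ω') :
    (fun j ↦ a j • X (f j)) ∈ operatorConvexHull Ω' := by
  obtain ⟨κ, _, v, E, hv, hE, hsum, hX⟩ := hX
  refine ⟨κ, _, fun i j ↦ a j * v i (f j), E, fun i ↦ hΩ (hv i), hE, hsum, fun j ↦ ?_⟩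
  simp only [mul_smul, ← Finset.smul_sum, hX]

lemma jointQuadForm_mem_convexHull {Ω : Set (ι → ℂ)} {X : ι → L →L[ℂ] L}
    (hX : X ∈ operatorConvexHull Ω) {u : L} (hu : ‖u‖ = 1) :
    jointQuadForm X u ∈ convexHull ℝ Ω := by
  obtain ⟨κ, _, v, E, hv, hE, hsum, hX⟩ := hX
  have hpos (i : κ) : (E i).IsPositive := (E i).nonneg_iff_isPositive.1 (hE i)
  have hreal (i : κ) : ⟪u, E i u⟫ = ((⟪u, E i u⟫.re : ℝ) : ℂ) :=
    (Complex.conj_eq_iff_re.1 ((inner_conj_symm _ _).trans ((hpos i).isSymmetric u u))).symm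
  refine mem_convexHull_of_exists_fintype (fun i ↦ ⟪u, E i u⟫.re) v
    (fun i ↦ (hpos i).re_inner_nonneg_right u) ?_ hv ?_
  · rw [← Complex.re_sum, ← inner_sum, ← sum_apply, hsum]
    simp [hu]
  · ext j
    simp only [jointQuadForm, ← hX, Finset.sum_apply, Pi.smul_apply, sum_apply,
      smul_apply, inner_sum, inner_smul_right, Complex.real_smul]
    exact Finset.sum_congr rfl fun i _ ↦ by rw [mul_comm, ← hreal]

lemma dft_single {N : ℕ} [NeZero N] {V : Type*} [AddCommGroup V] [Module ℂ V] (a : ZMod N) (x : V)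
    (i : ZMod N) : ZMod.dft (Pi.single a x) i = ZMod.stdAddChar (-(a * i)) • x := by
  rw [ZMod.dft_apply, Finset.sum_eq_single_of_mem a (Finset.mem_univ a), Pi.single_eq_same]
  intro b _ hb
  rw [Pi.single_eq_of_ne hb, smul_zero]

open scoped ComplexOrder in
lemma comp_mem_operatorConvexHull_of_dft_nonneg {N : ℕ} [NeZero N] {Φ : ZMod N → L →L[ℂ] L}
    (hΦ : Φ 0 = 1) (hpos : ∀ i, 0 ≤ ZMod.dft Φ i) (m : ι → ZMod N) :
    (fun j ↦ Φ (m j)) ∈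
      operatorConvexHull (Set.range fun i j ↦ (ZMod.stdAddChar (i * m j) : ℂ)) := by
  have hinv (k : ZMod N) : ∑ i, ZMod.stdAddChar (i * k) • ((N : ℂ)⁻¹ • ZMod.dft Φ i) = Φ k := by
    simp only [smul_comm _ (N : ℂ)⁻¹, ← Finset.smul_sum]
    rw [← ZMod.invDFT_apply, LinearEquiv.symm_apply_apply]
  refine ⟨ZMod N, inferInstance, _, fun i ↦ (N : ℂ)⁻¹ • ZMod.dft Φ i, fun i ↦ ⟨i, rfl⟩,
    fun i ↦ ?_, ?_, fun j ↦ hinv (m j)⟩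
  · rw [ContinuousLinearMap.nonneg_iff_isPositive]
    exact ((ZMod.dft Φ i).nonneg_iff_isPositive.1 (hpos i)).smul_of_nonneg
      (inv_nonneg.2 N.cast_nonneg)
  · simpa only [mul_zero, AddChar.map_zero_eq_one, one_smul, hΦ] using hinv 0

variable [CompleteSpace L]

lemma one_add_add_star_nonneg {Y : L →L[ℂ] L} (hY : ∀ x, 0 ≤ ‖x‖ ^ 2 + 2 * ⟪x, Y x⟫.re) :
    0 ≤ 1 + Y + star Y := by
  rw [ContinuousLinearMap.nonneg_iff_isPositive, ContinuousLinearMap.isPositive_def']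
  refine ⟨by simp [isSelfAdjoint_iff, add_right_comm], fun x ↦ (hY x).trans_eq ?_⟩
  have hswap : ⟪Y x, x⟫.re = ⟪x, Y x⟫.re := inner_re_symm (𝕜 := ℂ) _ _
  simp only [ContinuousLinearMap.reApplyInnerSelf_apply, add_apply, one_apply_eq_self,
    inner_add_left, inner_self_eq_ofReal, ContinuousLinearMap.star_eq_adjoint,
    ContinuousLinearMap.adjoint_inner_left, RCLike.re_to_complex, Complex.add_re,
    Complex.ofReal_re, hswap]
  ring

lemma mem_operatorConvexHull_circle {K : ℕ} {X : Fin K → L →L[ℂ] L}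
    (hX : ∀ w : ℂ, ‖w‖ = 1 → ∀ x,
      0 ≤ ‖x‖ ^ 2 + 2 * ⟪x, (∑ k, star (momentVec K w k) • X k) x⟫.re) :
    X ∈ operatorConvexHull (momentVec K '' sphere 0 1) := by
  -- As `N > 2 * K`, the coefficients of `1 + ∑ k, (w̄ ^ (k+1) X k + w ^ (k+1) (X k)*)` can be read
  -- as a function on `ZMod N`; its Fourier transform samples this polynomial at the roots of unity.
  let N := 2 * K + 1
  let m (k : Fin K) : ZMod N := ((k.val + 1 : ℕ) : ZMod N)
  let Φ : ZMod N → L →L[ℂ] L :=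
    Pi.single 0 1 + ∑ k, (Pi.single (m k) (X k) + Pi.single (-m k) (star (X k)))
  have hm {k l : Fin K} : m k = m l ↔ k = l := by
    rw [ZMod.natCast_eq_natCast_iff', Nat.mod_eq_of_lt (by omega), Nat.mod_eq_of_lt (by omega),
      Fin.ext_iff, Nat.succ_inj]
  have hm_ne {k : Fin K} : m k ≠ 0 := fun h ↦
    absurd (Nat.le_of_dvd (by omega) ((ZMod.natCast_eq_zero_iff _ _).1 h)) (by omega)
  have hm_neg {k l : Fin K} : m k ≠ -m l := fun h ↦ by
    rw [eq_neg_iff_add_eq_zero, ← Nat.cast_add, ZMod.natCast_eq_zero_iff] at h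
    exact absurd (Nat.le_of_dvd (by omega) h) (by omega)
  have hmoment (i : ZMod N) :
      momentVec K (ZMod.stdAddChar i) = fun k ↦ ZMod.stdAddChar (i * m k) := funext fun k ↦ by
    simp only [momentVec, m, mul_comm i, ← nsmul_eq_mul, AddChar.map_nsmul_eq_pow]
  have hdft (i : ZMod N) : 0 ≤ ZMod.dft Φ i := by
    convert one_add_add_star_nonneg (hX (ZMod.stdAddChar i) (by simp)) using 1
    simp only [Φ, map_add, map_sum, Pi.add_apply, Finset.sum_apply, dft_single, hmoment,
      Finset.sum_add_distrib, star_sum, star_smul, star_star]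
    simp [AddChar.map_neg_eq_conj, mul_comm, add_assoc]
  have hΦ (j : Fin K) : Φ (m j) = X j := by
    simp [Φ, Pi.single_apply, hm, hm_ne, hm_neg]
  have hΦ0 : Φ 0 = 1 := by simp [Φ, hm_ne, hm_ne.symm]
  convert mul_comp_mem_operatorConvexHull (comp_mem_operatorConvexHull_of_dft_nonneg hΦ0 hdft m)
    1 id ?_
  · simp [hΦ]
  · rintro _ ⟨i, rfl⟩
    exact ⟨ZMod.stdAddChar i, by simp, by simp [hmoment]⟩

lemma le_norm_sq_add_two_mul_re_inner_sum_pow {Z : L →L[ℂ] L} {c : ℝ} (hZ : ‖Z‖ ≤ c) (hc : c < 1)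
    (m : ℕ) (x : L) :
    ((1 - c) / (1 + c) - 2 * c ^ (m + 1) / (1 - c)) * ‖x‖ ^ 2 ≤
      ‖x‖ ^ 2 + 2 * ⟪x, ∑ k ∈ Finset.range m, (Z ^ (k + 1)) x⟫.re := by
  have hc0 : 0 ≤ c := (norm_nonneg Z).trans hZ
  have hc1 : 0 < 1 - c := sub_pos.2 hc
  -- With `y = (1 - Z)⁻¹ x`, the full Neumann series gives the Poisson kernel identity `hpoisson`.
  obtain ⟨y, hy⟩ : ∃ y, y - Z y = x := by
    obtain ⟨R, hR⟩ := (isUnit_one_sub_of_norm_lt_one (hZ.trans_lt hc)).exists_right_inv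
    exact ⟨R x, congrArg (· x) hR⟩
  have hgeom : ∑ k ∈ Finset.range m, (Z ^ (k + 1)) x = Z y - (Z ^ (m + 1)) y := by
    have hterm (k : ℕ) : (Z ^ (k + 1)) x = (Z ^ (k + 1)) y - (Z ^ (k + 1 + 1)) y := by
      rw [← hy, map_sub, pow_succ Z (k + 1)]
      rfl
    simp only [hterm, Finset.sum_range_sub' fun k ↦ (Z ^ (k + 1)) y, zero_add, pow_one]
  have hZy : ‖Z y‖ ≤ c * ‖y‖ := Z.le_of_opNorm_le hZ y
  have hpow : ‖(Z ^ (m + 1)) y‖ ≤ c ^ (m + 1) * ‖y‖ :=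
    (Z ^ (m + 1)).le_of_opNorm_le ((norm_pow_le' Z m.succ_pos).trans (by gcongr)) y
  have hy_le : ‖y‖ ≤ ‖x‖ / (1 - c) := by
    rw [le_div_iff₀ hc1, ← hy]
    linarith [norm_sub_norm_le y (Z y)]
  have hx_le : ‖x‖ ≤ (1 + c) * ‖y‖ := by
    rw [← hy]
    linarith [norm_sub_le y (Z y)]
  have hpoisson : ‖x‖ ^ 2 + 2 * ⟪x, Z y⟫.re = ‖y‖ ^ 2 - ‖Z y‖ ^ 2 := by
    have hadd := norm_add_sq (𝕜 := ℂ) x (Z y)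
    rw [← hy, sub_add_cancel, hy, RCLike.re_to_complex] at hadd
    linarith
  have hmain : (1 - c) / (1 + c) * ‖x‖ ^ 2 ≤ ‖y‖ ^ 2 - ‖Z y‖ ^ 2 := calc
    (1 - c) / (1 + c) * ‖x‖ ^ 2 ≤ (1 - c) / (1 + c) * ((1 + c) * ‖y‖) ^ 2 := by gcongr
    _ = ‖y‖ ^ 2 - (c * ‖y‖) ^ 2 := by field_simp; ring
    _ ≤ ‖y‖ ^ 2 - ‖Z y‖ ^ 2 := by gcongr
  have htail : ⟪x, (Z ^ (m + 1)) y⟫.re ≤ c ^ (m + 1) / (1 - c) * ‖x‖ ^ 2 := calc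
    ⟪x, (Z ^ (m + 1)) y⟫.re ≤ ‖x‖ * ‖(Z ^ (m + 1)) y‖ := re_inner_le_norm (𝕜 := ℂ) _ _
    _ ≤ ‖x‖ * (c ^ (m + 1) * (‖x‖ / (1 - c))) := by gcongr; exact hpow.trans (by gcongr)
    _ = c ^ (m + 1) / (1 - c) * ‖x‖ ^ 2 := by ring
  rw [hgeom, inner_sub_right, Complex.sub_re]
  linear_combination hmain - hpoisson + 2 * htail

lemma add_mem_operatorConvexHull_circle {n : ℕ} {C : L →L[ℂ] L} {A : Fin n → L →L[ℂ] L}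
    (hA : 2 * (1 + ‖C‖) * ∑ j, ‖A j‖ < 1 - ‖C‖) :
    (fun j : Fin n ↦ C ^ (j.val + 1) + A j) ∈ operatorConvexHull (momentVec n '' sphere 0 1) := by
  have hC : ‖C‖ < 1 := by
    have : 0 ≤ 2 * (1 + ‖C‖) * ∑ j, ‖A j‖ := by positivity
    linarith
  have hgap : 0 < (1 - ‖C‖) / (1 + ‖C‖) - 2 * ∑ j, ‖A j‖ := by
    rw [sub_pos, lt_div_iff₀ (by positivity)]
    linarith
  -- The Poisson kernel of `C` is truncated after `n + l` terms, late enough to stay positive.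
  obtain ⟨l, hl⟩ : ∃ l : ℕ, 2 * ‖C‖ ^ (n + l + 1) / (1 - ‖C‖) ≤
      (1 - ‖C‖) / (1 + ‖C‖) - 2 * ∑ j, ‖A j‖ := by
    have hlim := (((tendsto_pow_atTop_nhds_zero_of_lt_one (norm_nonneg C) hC).const_mul 2).div_const
      (1 - ‖C‖)).comp (tendsto_atTop_mono (fun l : ℕ ↦ show l ≤ n + l + 1 by omega) tendsto_id)
    rw [mul_zero, zero_div] at hlim
    exact (hlim.eventually_le_const hgap).exists
  let X (k : Fin (n + l)) : L →L[ℂ] L := C ^ (k.val + 1) + Fin.append A 0 k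
  have hX : X ∈ operatorConvexHull (momentVec (n + l) '' sphere 0 1) := by
    refine mem_operatorConvexHull_circle fun w hw x ↦ ?_
    let R := ∑ j, star (momentVec n w j) • A j
    have hR : ‖R‖ ≤ ∑ j, ‖A j‖ := norm_sum_le_of_le _ fun j _ ↦ by
      simp [momentVec, norm_smul, hw]
    have hRx : -((∑ j, ‖A j‖) * ‖x‖ ^ 2) ≤ ⟪x, R x⟫.re := neg_le.1 <| calc
      -⟪x, R x⟫.re ≤ ‖x‖ * ‖R x‖ := (neg_le_abs _).trans ((Complex.abs_re_le_norm _).trans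
        (norm_inner_le_norm _ _))
      _ ≤ ‖x‖ * ((∑ j, ‖A j‖) * ‖x‖) := by gcongr; exact R.le_of_opNorm_le hR x
      _ = (∑ j, ‖A j‖) * ‖x‖ ^ 2 := by ring
    have hpoisson := le_norm_sq_add_two_mul_re_inner_sum_pow (Z := star w • C) (c := ‖C‖)
      (by simp [norm_smul, hw]) hC (n + l) x
    have hsum : (∑ k, star (momentVec (n + l) w k) • X k) x =
        ∑ k ∈ Finset.range (n + l), ((star w • C) ^ (k + 1)) x + R x := by
      simp [X, R, ← Fin.sum_univ_eq_sum_range, Finset.sum_add_distrib, momentVec, smul_pow,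
        Fin.sum_univ_add]
    rw [hsum, inner_add_right, Complex.add_re]
    linear_combination hpoisson + 2 * hRx + ‖x‖ ^ 2 * hl
  convert mul_comp_mem_operatorConvexHull (Ω' := momentVec n '' sphere 0 1) hX 1 (Fin.castAdd l) ?_
    using 2
  · simp [X]
  · rintro _ ⟨w, hw, rfl⟩
    exact ⟨w, hw, by ext; simp [momentVec]⟩

lemma add_mem_operatorConvexHull_disc {n : ℕ} {C : L →L[ℂ] L} {A : Fin n → L →L[ℂ] L}
    (hA : 2 * (1 + ‖C‖) * ∑ j, ‖A j‖ < 1 - ‖C‖) :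
    (fun j : Fin n ↦ C ^ (j.val + 1) + A j) ∈ operatorConvexHull (momentVec n '' ball 0 1) := by
  -- Dilate `C` by some `s > 1` slightly, then shrink the circle by `s⁻¹`.
  let B (s : ℝ) (j : Fin n) : L →L[ℂ] L := ((s : ℂ) ^ (j.val + 1)) • A j
  obtain ⟨s, hBs, hs : 1 < s⟩ : ∃ s : ℝ,
      2 * (1 + ‖(s : ℂ) • C‖) * ∑ j, ‖B s j‖ < 1 - ‖(s : ℂ) • C‖ ∧ 1 < s := by
    have hcont : Continuous fun s : ℝ ↦
        1 - ‖(s : ℂ) • C‖ - 2 * (1 + ‖(s : ℂ) • C‖) * ∑ j, ‖B s j‖ := by fun_prop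
    have hev : ∀ᶠ s : ℝ in nhdsWithin 1 (Set.Ioi 1), 0 <
        1 - ‖(s : ℂ) • C‖ - 2 * (1 + ‖(s : ℂ) • C‖) * ∑ j, ‖B s j‖ :=
      (hcont.tendsto 1).mono_left nhdsWithin_le_nhds |>.eventually_const_lt (by simpa [B] using hA)
    obtain ⟨s, h, hs⟩ := (hev.and self_mem_nhdsWithin).exists
    exact ⟨s, sub_pos.1 h, hs⟩
  have hs0 : (s : ℂ) ≠ 0 := by exact_mod_cast (zero_lt_one.trans hs).ne'
  convert mul_comp_mem_operatorConvexHull (Ω' := momentVec n '' ball 0 1)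
    (add_mem_operatorConvexHull_circle hBs) (fun j ↦ ((s : ℂ) ^ (j.val + 1))⁻¹) id ?_ using 2 with j
  · simp only [B, smul_pow, ← smul_add, id, inv_smul_smul₀ (pow_ne_zero _ hs0)]
  · rintro _ ⟨w, hw, rfl⟩
    refine ⟨(s : ℂ)⁻¹ * w, ?_, by ext; simp [momentVec, mul_pow]⟩
    simpa [mem_sphere_zero_iff_norm.1 hw, abs_of_pos (zero_lt_one.trans hs)]
      using inv_lt_one_of_one_lt₀ hs

theorem image_momentVec_ball_subset_interior_convexHull (n : ℕ) :
    momentVec n '' ball 0 1 ⊆ interior (convexHull ℝ (momentVec n '' ball 0 1)) := by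
  rintro _ ⟨z, hz, rfl⟩
  rw [mem_interior_iff_mem_nhds]
  have hev : ∀ᶠ v in nhds (momentVec n z),
      2 * (1 + ‖z • (1 : ℂ →L[ℂ] ℂ)‖) * ∑ j, ‖(v - momentVec n z) j • (1 : ℂ →L[ℂ] ℂ)‖ <
        1 - ‖z • (1 : ℂ →L[ℂ] ℂ)‖ := by
    have hcont : Continuous fun v : Fin n → ℂ ↦ 2 * (1 + ‖z • (1 : ℂ →L[ℂ] ℂ)‖) *
      ∑ j, ‖(v - momentVec n z) j • (1 : ℂ →L[ℂ] ℂ)‖ := by fun_prop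
    refine (hcont.tendsto _).eventually_lt_const ?_
    simpa [norm_smul] using mem_ball_zero_iff.1 hz
  filter_upwards [hev] with v hv
  convert jointQuadForm_mem_convexHull (add_mem_operatorConvexHull_disc hv) (norm_one (α := ℂ))
  ext j
  simp [jointQuadForm, momentVec, smul_pow]

end OperatorConvexHull

section Dilation

lemma countable_of_orthonormal {𝕜 E ι : Type*} [RCLike 𝕜] [NormedAddCommGroup E]
    [InnerProductSpace 𝕜 E] [TopologicalSpace.SeparableSpace E] {v : ι → E}
    (hv : Orthonormal 𝕜 v) : Countable ι := by
  have hdisj : Pairwise (Function.onFun Disjoint fun k ↦ ball (v k) (1 / 2)) := fun k l hkl ↦ by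
    refine ball_disjoint_ball ?_
    have hdist : ‖v k - v l‖ ^ 2 = 2 := by
      rw [norm_sub_sq (𝕜 := 𝕜), hv.2 hkl, hv.1, hv.1]
      norm_num
    rw [dist_eq_norm]
    nlinarith [norm_nonneg (v k - v l)]
  exact hdisj.countable_of_isOpen_disjoint (fun _ ↦ isOpen_ball)
    fun k ↦ ⟨v k, mem_ball_self (by norm_num)⟩

variable {H L : Type*} [NormedAddCommGroup H] [InnerProductSpace ℂ H] [CompleteSpace H]
  [NormedAddCommGroup L] [InnerProductSpace ℂ L] {ι κ β : Type*}

lemma exists_linearIsometry_apply_hilbertBasis (b : HilbertBasis β ℂ L) {x : β → H}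
    (hx : Orthonormal ℂ x) : ∃ V : L →ₗᵢ[ℂ] H, ∀ k, V (b k) = x k := by
  classical
  refine ⟨hx.orthogonalFamily.linearIsometry.comp b.repr.toLinearIsometry, fun k ↦ ?_⟩
  have hsingle := hx.orthogonalFamily.linearIsometry_apply_single (i := k) (1 : ℂ)
  rw [← b.repr_self] at hsingle
  exact hsingle.trans (one_smul ℂ (x k))

variable [CompleteSpace L]

lemma inner_apply_eq_mul_of_hilbertBasis (b : HilbertBasis β ℂ L) {R : H →L[ℂ] H}
    {V W : L →L[ℂ] H} {c : ℂ} (h : ∀ k l, ⟪V (b k), R (W (b l))⟫ = c * ⟪b k, b l⟫) (u v : L) :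
    ⟪V u, R (W v)⟫ = c * ⟪u, v⟫ := by
  have hcomp : V.adjoint ∘L R ∘L W = c • 1 := by
    refine ContinuousLinearMap.ext_on
      (Submodule.dense_iff_topologicalClosure_eq_top.2 b.dense_span) ?_
    rintro _ ⟨l, rfl⟩
    refine b.repr.injective (lp.ext (funext fun k ↦ ?_))
    simpa [b.repr_apply_apply, ContinuousLinearMap.adjoint_inner_right, inner_smul_right]
      using h k l
  rw [← ContinuousLinearMap.adjoint_inner_right, ← inner_smul_right]
  exact congrArg (fun Q : L →L[ℂ] L ↦ ⟪u, Q v⟫) hcomp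

lemma exists_linearIsometry_inner_eq_ite [TopologicalSpace.SeparableSpace L] [Finite ι]
    [Countable κ] [DecidableEq κ] {S : ι → H →L[ℂ] H} {v : κ → ι → ℂ}
    (hv : ∀ i, v i ∈ interior (essNumRange S)) :
    ∃ V : κ → L →ₗᵢ[ℂ] H, ∀ i l x y,
      ⟪V i x, V l y⟫ = (if i = l then 1 else 0) * ⟪x, y⟫ ∧
      ∀ j, ⟪V i x, S j (V l y)⟫ = (if i = l then v i j else 0) * ⟪x, y⟫ := by
  classical
  obtain ⟨w, b, -⟩ := exists_hilbertBasis ℂ L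
  have : Countable w := countable_of_orthonormal b.orthonormal
  obtain ⟨x, hx, hdec⟩ := exists_pairwise_isDecoupled S
    (P := fun (k : κ × w) x ↦ ‖x‖ = 1 ∧ jointQuadForm S x = v k.1) fun k s ↦ by
      obtain ⟨x, hx1, hxs, hxv⟩ := mem_numRangeOn_of_mem_interior_essNumRange (hv k.1) s
      exact ⟨x, ⟨hx1, hxv⟩, hxs⟩
  have hne {i l : κ} {k m : w} (h : ¬(i = l ∧ k = m)) : IsDecoupled S (x (i, k)) (x (l, m)) :=
    hdec fun heq ↦ h (Prod.ext_iff.1 heq)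
  have horth (i : κ) : Orthonormal ℂ fun k ↦ x (i, k) :=
    ⟨fun k ↦ (hx _).1, fun k m hkm ↦ (hne fun h ↦ hkm h.2).1⟩
  choose V hV using fun i ↦ exists_linearIsometry_apply_hilbertBasis b (horth i)
  have hform {R : H →L[ℂ] H} {c : κ → ℂ} (hdiag : ∀ i k, ⟪x (i, k), R (x (i, k))⟫ = c i)
      (hoff : ∀ {y z}, IsDecoupled S y z → ⟪y, R z⟫ = 0) (i l : κ) (y z : L) :
      ⟪V i y, R (V l z)⟫ = (if i = l then c i else 0) * ⟪y, z⟫ := by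
    refine inner_apply_eq_mul_of_hilbertBasis b (V := (V i).toContinuousLinearMap)
      (W := (V l).toContinuousLinearMap) (fun k m ↦ ?_) y z
    simp only [LinearIsometry.coe_toContinuousLinearMap, hV, orthonormal_iff_ite.1 b.orthonormal]
    by_cases hil : i = l ∧ k = m
    · obtain ⟨rfl, rfl⟩ := hil
      simp [hdiag]
    · rw [hoff (hne hil)]
      rcases not_and_or.1 hil with h | h <;> simp [h]
  refine ⟨V, fun i l y z ↦ ⟨?_, fun j ↦ ?_⟩⟩
  · exact hform (R := 1) (c := 1) (by simp [(hx _).1]) (fun h ↦ h.1) i l y z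
  · exact hform (c := (v · j)) (fun i k ↦ congrFun (hx (i, k)).2 j) (fun h ↦ (h.2 j).1) i l y z

theorem exists_linearIsometry_inner_eq_of_mem_operatorConvexHull
    [TopologicalSpace.SeparableSpace L] [Finite ι] {S : ι → H →L[ℂ] H} {X : ι → L →L[ℂ] L}
    (hX : X ∈ operatorConvexHull (interior (essNumRange S))) :
    ∃ U : L →ₗᵢ[ℂ] H, ∀ j x y, ⟪U x, S j (U y)⟫ = ⟪x, X j y⟫ := by
  classical
  obtain ⟨κ, _, v, E, hv, hE, hsum, hX⟩ := hX
  choose B hB using fun i ↦ CStarAlgebra.nonneg_iff_eq_star_mul_self.1 (hE i)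
  obtain ⟨V, hV⟩ := exists_linearIsometry_inner_eq_ite (L := L) hv
  have hBB (i : κ) (x y : L) : ⟪B i x, B i y⟫ = ⟪x, E i y⟫ := by
    rw [hB, mul_apply_eq_comp, ContinuousLinearMap.star_eq_adjoint,
      ContinuousLinearMap.adjoint_inner_right]
  let W : L →ₗ[ℂ] H := ∑ i, (V i).toLinearMap ∘ₗ (B i).toLinearMap
  have hW (x : L) : W x = ∑ i, V i (B i x) := by simp [W]
  have hWW (x y : L) : ⟪W x, W y⟫ = ⟪x, y⟫ := by
    simp only [hW, sum_inner, inner_sum, (hV _ _ _ _).1, ite_mul, zero_mul, one_mul,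
      Finset.sum_ite_eq', Finset.mem_univ, if_true, hBB]
    rw [← inner_sum, ← sum_apply, hsum, one_apply_eq_self]
  refine ⟨W.isometryOfInner hWW, fun j x y ↦ ?_⟩
  simp only [LinearMap.coe_isometryOfInner, hW, map_sum, sum_inner, inner_sum, (hV _ _ _ _).2,
    ite_mul, zero_mul, Finset.sum_ite_eq', Finset.mem_univ, if_true, hBB, ← hX, sum_apply,
    smul_apply, inner_smul_right]

end Dilation

theorem image_momentVec_ball_subset_interior_essNumRange {H : Type*} [NormedAddCommGroup H]
    [InnerProductSpace ℂ H] [CompleteSpace H] {T : H →L[ℂ] H}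
    (hσ : closedBall (0 : ℂ) 1 ⊆ polyHull (spectrum ℂ T)) (n : ℕ) :
    momentVec n '' ball 0 1 ⊆ interior (essNumRange fun j : Fin n ↦ T ^ (j.val + 1)) := by
  refine (image_momentVec_ball_subset_interior_convexHull n).trans
    (interior_mono (convexHull_min ?_ (convex_essNumRange _)))
  rintro _ ⟨z, hz, rfl⟩
  exact momentVec_mem_essNumRange T n
    (subset_closure (interior_maximal (ball_subset_closedBall.trans hσ) isOpen_ball hz))

lemma two_mul_sum_norm_lt {n : ℕ} (hn : 1 ≤ n) {F : Type*} [SeminormedAddCommGroup F] {c : ℝ}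
    (hc0 : 0 ≤ c) (hc1 : c < 1) {A : Fin n → F}
    (hA : ∀ j, ‖A j‖ ≤ (1 - c) ^ n / (n * 2 ^ (2 * n + 4))) :
    2 * (1 + c) * ∑ j, ‖A j‖ < 1 - c := by
  have hsum : ∑ j, ‖A j‖ ≤ (1 - c) / 16 := calc
    ∑ j, ‖A j‖ ≤ ∑ _j : Fin n, (1 - c) ^ n / (n * 2 ^ (2 * n + 4)) :=
      Finset.sum_le_sum fun j _ ↦ hA j
    _ = (1 - c) ^ n / 2 ^ (2 * n + 4) := by
      rw [Finset.sum_const, Finset.card_univ, Fintype.card_fin, nsmul_eq_mul]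
      field_simp
    _ ≤ (1 - c) / 16 := by
      have hpow : (1 - c) ^ n ≤ 1 - c := pow_le_of_le_one (by linarith) (by linarith) (by omega)
      have htwo : (16 : ℝ) ≤ 2 ^ (2 * n + 4) := by
        rw [pow_add]
        linarith [one_le_pow₀ (n := 2 * n) (one_le_two (α := ℝ))]
      gcongr
  nlinarith

theorem stmt_17_general {H : Type*} [NormedAddCommGroup H] [InnerProductSpace ℂ H]
    [CompleteSpace H] {T : H →L[ℂ] H} (hσ : closedBall (0 : ℂ) 1 ⊆ polyHull (spectrum ℂ T))
    {n : ℕ} {L : Type*} [NormedAddCommGroup L] [InnerProductSpace ℂ L] [CompleteSpace L]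
    [TopologicalSpace.SeparableSpace L] {C : L →L[ℂ] L} {A : Fin n → L →L[ℂ] L}
    (hA : 2 * (1 + ‖C‖) * ∑ j, ‖A j‖ < 1 - ‖C‖) :
    ∃ (K : Submodule ℂ H) (U : L →ₗᵢ[ℂ] H),
      IsClosed (K : Set H) ∧ Set.range U = (K : Set H) ∧
      ∀ (j : Fin n) (u v : L),
        ⟪(T ^ (j.val + 1)) (U u), U v⟫ = ⟪(C ^ (j.val + 1) + A j) u, v⟫ := by
  obtain ⟨U, hU⟩ := exists_linearIsometry_inner_eq_of_mem_operatorConvexHull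
    (operatorConvexHull_mono (image_momentVec_ball_subset_interior_essNumRange hσ n)
      (add_mem_operatorConvexHull_disc hA))
  refine ⟨LinearMap.range U.toLinearMap, U, U.isometry.isClosedEmbedding.isClosed_range, rfl,
    fun j u v ↦ ?_⟩
  rw [← inner_conj_symm, hU, inner_conj_symm]

/-- If `σ̂(T) ⊇ 𝔻̄`, `‖C‖ < 1` and `‖A_j‖ ≤ (1 - ‖C‖)^n / (n 2^{2n+4})`, then there is
a closed subspace `K ⊂ H` (the range of a linear isometry `U : L → H`) such that the
compression of `(T, T², …, T^n)` to `K` is jointly unitarily equivalent to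
`(C + A_1, C² + A_2, …, C^n + A_n)`. -/
theorem stmt_17 {H : Type*} [NormedAddCommGroup H] [InnerProductSpace ℂ H]
    [CompleteSpace H] [TopologicalSpace.SeparableSpace H]
    (hdim : ¬ FiniteDimensional ℂ H)
    (T : H →L[ℂ] H) (hσ : Metric.closedBall (0 : ℂ) 1 ⊆ polyHull (spectrum ℂ T))
    (n : ℕ) (hn : 1 ≤ n)
    (L : Type*) [NormedAddCommGroup L] [InnerProductSpace ℂ L] [CompleteSpace L]
    [TopologicalSpace.SeparableSpace L] [Nontrivial L]
    (C : L →L[ℂ] L) (hC : ‖C‖ < 1)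
    (A : Fin n → L →L[ℂ] L)
    (hA : ∀ j, ‖A j‖ ≤ (1 - ‖C‖) ^ n / (n * 2 ^ (2 * n + 4))) :
    ∃ (K : Submodule ℂ H) (U : L →ₗᵢ[ℂ] H),
      IsClosed (K : Set H) ∧ Set.range U = (K : Set H) ∧
      ∀ (j : Fin n) (u v : L),
        ⟪(T ^ (j.val + 1)) (U u), U v⟫ = ⟪(C ^ (j.val + 1) + A j) u, v⟫ :=
  stmt_17_general hσ (two_mul_sum_norm_lt hn (norm_nonneg C) hC hA)
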